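/- Let d ≥ 1, 1 ≤ p ≤ ∞, and let α be a nonzero multi-index in ℕ^d. Then there exists a constant C > 0 (depending only on d, p and α) such that ‖∂_x^α K_t‖_{L^p(𝕋^d)} ≤ C t^{−|α|/2 − (d/2)(1 − 1/p)} for all t > 0. -/

import Mathlib

/-!
With `s = (2t)^(-1/2)` the heat kernel is `(2π)^(-d/2) s^d ∏ᵢ θ(xᵢ)`, where
`θ(x) = ∑ₙ exp (-(s (x - 2πn))² / 2)` is a periodized Gaussian, and `∂^α` acts factorwise
(`multiDeriv_prodKernel`). Since the derivatives of the Gaussian are polynomials times the Gaussian,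
on one period `|θ^(m)(x)| ≤ C s^m (1 + s⁻²) bump s x`, where `bump` is the sum of the two Gaussians
`exp (-(s ·)² / 4)` centred at `0` and `2π` (`exists_perGauss_bound`).

For `s ≥ 1` (short times) the product of these bounds is `C s^(d + |α|)` times a function with values
in `[0, 1]` and integral `O(s^(-d))`, whose `L^p` norm is `O(s^(-d/p))`; this is the claimed rate.

For `s ≤ 1` (long times) no Fourier series is needed: a derivative `θ^(m)`, `m ≥ 1`, vanishes
somewhere in each period by Rolle's theorem, so `sup |θ^(m)| ≤ 2π sup |θ^(m+1)|`. Iterating gives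
`θ^(m) = O(s^N)` for every `N` (`exists_perGauss_decay`). As `α ≠ 0`, at least one factor has this
decay, and it absorbs the crude bound `O(s⁻²)` of all the others.
-/

open MeasureTheory
open scoped ENNReal

/-- The heat kernel on the torus `𝕋^d = (ℝ/2πℤ)^d`, viewed as a `2π`-periodic
function on `ℝ^d`. -/
noncomputable def torusHeatKernel (d : ℕ) (t : ℝ) (x : Fin d → ℝ) : ℝ :=
  ∑' k : Fin d → ℤ,
    (4 * Real.pi * t) ^ (-(d : ℝ) / 2) *
      Real.exp (-(∑ i, (x i - 2 * Real.pi * (k i)) ^ 2) / (4 * t))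

/-- Lebesgue measure restricted to a fundamental domain of `𝕋^d`. -/
noncomputable def torusMeasure (d : ℕ) : Measure (Fin d → ℝ) :=
  volume.restrict (Set.pi Set.univ fun _ => Set.Ioc 0 (2 * Real.pi))

/-- The partial derivative `∂_i` of a function on `ℝ^d`. -/
noncomputable def pderivCoord (d : ℕ) (i : Fin d) (f : (Fin d → ℝ) → ℝ) :
    (Fin d → ℝ) → ℝ :=
  fun x => fderiv ℝ f x (Pi.single i 1)

/-- The multi-index partial derivative `∂^α` of a function on `ℝ^d`. -/
noncomputable def multiDeriv (d : ℕ) (α : Fin d → ℕ) (f : (Fin d → ℝ) → ℝ) :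
    (Fin d → ℝ) → ℝ :=
  (List.finRange d).foldl (fun g i => (pderivCoord d i)^[α i] g) f

namespace TorusHeat

/-! ### The Gaussian and its derivatives -/

open Polynomial in
/-- Up to sign the Hermite polynomials: `gaussPoly m * exp (-y² / 2)` is the `m`-th derivative of
`exp (-y² / 2)`. -/
noncomputable def gaussPoly : ℕ → ℝ[X]
  | 0 => 1
  | m + 1 => derivative (gaussPoly m) - X * gaussPoly m

/-- The `m`-th derivative of `exp (-y² / 2)`. -/
noncomputable def gauss (m : ℕ) (y : ℝ) : ℝ := (gaussPoly m).eval y * Real.exp (-y ^ 2 / 2)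

lemma hasDerivAt_gauss (m : ℕ) (y : ℝ) : HasDerivAt (gauss m) (gauss (m + 1) y) y := by
  have h1 := (gaussPoly m).hasDerivAt y
  have h2 : HasDerivAt (fun y : ℝ => Real.exp (-y ^ 2 / 2)) (Real.exp (-y ^ 2 / 2) * (-y)) y := by
    apply HasDerivAt.exp
    have := ((hasDerivAt_pow 2 y).neg).div_const 2
    refine this.congr_deriv ?_
    norm_num
    ring
  refine (h1.mul h2).congr_deriv ?_
  simp only [gauss, gaussPoly, Polynomial.eval_sub, Polynomial.eval_mul, Polynomial.eval_X]
  ring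

lemma exists_poly_bound (q : Polynomial ℝ) :
    ∃ C : ℝ, 0 < C ∧ ∀ y : ℝ, |q.eval y| ≤ C * Real.exp (y ^ 2 / 4) := by
  induction q using Polynomial.induction_on' with
  | add p q hp hq =>
    obtain ⟨C, hC, h⟩ := hp
    obtain ⟨D, hD, h'⟩ := hq
    refine ⟨C + D, by positivity, fun y => ?_⟩
    rw [Polynomial.eval_add, add_mul]
    exact (abs_add_le _ _).trans (add_le_add (h y) (h' y))
  | monomial n a =>
    refine ⟨(|a| + 1) * (1 + 4 ^ n * n.factorial), by positivity, fun y => ?_⟩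
    have h1 := Real.pow_div_factorial_le_exp (y ^ 2 / 4) (by positivity) n
    have h2 : (1 : ℝ) ≤ Real.exp (y ^ 2 / 4) := Real.one_le_exp (by positivity)
    have h3 : |y| ^ n ≤ 1 + (y ^ 2) ^ n := by
      have : (y ^ 2) ^ n = (|y| ^ n) ^ 2 := by rw [← sq_abs y]; ring
      rw [this]
      nlinarith [sq_nonneg (|y| ^ n - 1)]
    have h4 : (y ^ 2) ^ n ≤ 4 ^ n * n.factorial * Real.exp (y ^ 2 / 4) := by
      rw [div_pow, div_div, div_le_iff₀ (by positivity)] at h1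
      linarith
    rw [Polynomial.eval_monomial, abs_mul, abs_pow, mul_assoc]
    apply mul_le_mul (by linarith) (by nlinarith) (by positivity) (by positivity)

/-- Half of the Gaussian decay absorbs the polynomial factor. -/
lemma exists_gauss_bound (m : ℕ) :
    ∃ C : ℝ, 0 < C ∧ ∀ y : ℝ, |gauss m y| ≤ C * Real.exp (-y ^ 2 / 4) := by
  obtain ⟨C, hC, h⟩ := exists_poly_bound (gaussPoly m)
  refine ⟨C, hC, fun y => ?_⟩
  have : Real.exp (-y ^ 2 / 4) = Real.exp (y ^ 2 / 4) * Real.exp (-y ^ 2 / 2) := by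
    rw [← Real.exp_add]; congr 1; ring
  rw [this, gauss, abs_mul, Real.abs_exp, ← mul_assoc]
  gcongr
  exact h y

/-! ### Periodization in one variable -/

lemma summable_exp_neg_mul_nat {a : ℝ} (ha : 0 < a) :
    Summable fun j : ℕ => Real.exp (-a * j) := by
  have := Real.summable_exp_nat_mul_iff.2 (neg_lt_zero.2 ha)
  refine this.congr fun j => ?_
  rw [mul_comm]

lemma tsum_exp_neg_mul_nat_le {a : ℝ} (ha : 0 < a) :
    ∑' j : ℕ, Real.exp (-a * j) ≤ 1 + 1 / a := by
  have h : ∀ j : ℕ, Real.exp (-a * j) = Real.exp (-a) ^ j := fun j => by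
    rw [← Real.exp_nat_mul]; congr 1; ring
  simp_rw [h]
  have h1 : Real.exp (-a) < 1 := Real.exp_lt_one_iff.2 (by linarith)
  rw [tsum_geometric_of_lt_one (Real.exp_pos _).le h1]
  have h2 : Real.exp (-a) * (1 + a) ≤ 1 := by
    have := Real.add_one_le_exp a
    calc Real.exp (-a) * (1 + a) ≤ Real.exp (-a) * Real.exp a := by gcongr; linarith
      _ = 1 := by rw [← Real.exp_add]; simp
  rw [inv_le_iff_one_le_mul₀ (by linarith)]
  have h3 : 1 + 1 / a = (1 + a) / a := by field_simp; ring
  rw [h3, div_mul_eq_mul_div, le_div_iff₀ ha]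
  nlinarith

/-- For `y ≥ 0` one has `(y + 2πj)² ≥ y² + 4j`, so the shifted Gaussians are dominated by a
geometric series times the unshifted one. -/
lemma exp_shift_le {s y : ℝ} (hy : 0 ≤ y) (j : ℕ) :
    Real.exp (-(s * (y + 2 * Real.pi * j)) ^ 2 / 4) ≤
      Real.exp (-(s * y) ^ 2 / 4) * Real.exp (-s ^ 2 * j) := by
  rw [← Real.exp_add, Real.exp_le_exp]
  have hpi := Real.pi_gt_three
  have hj : (j : ℝ) ≤ (j : ℝ) ^ 2 := by exact_mod_cast Nat.le_self_pow two_ne_zero j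
  have h1 : 4 * (j : ℝ) ≤ (2 * Real.pi * j) ^ 2 := by
    have : 1 ≤ Real.pi ^ 2 := by nlinarith
    nlinarith [mul_le_mul_of_nonneg_right this (sq_nonneg (j : ℝ))]
  have h2 : y ^ 2 + 4 * j ≤ (y + 2 * Real.pi * j) ^ 2 := by
    have : 0 ≤ y * (2 * Real.pi * j) := by positivity
    nlinarith
  nlinarith [mul_le_mul_of_nonneg_left h2 (sq_nonneg s)]

/-- The sum of the two Gaussians centred at the endpoints of the period `[0, 2π]`. -/
noncomputable def bump (s x : ℝ) : ℝ :=
  Real.exp (-(s * x) ^ 2 / 4) + Real.exp (-(s * (2 * Real.pi - x)) ^ 2 / 4)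

lemma bump_pos (s x : ℝ) : 0 < bump s x := by unfold bump; positivity

lemma bump_le_two (s x : ℝ) : bump s x ≤ 2 := by
  have h : ∀ y : ℝ, Real.exp (-y ^ 2 / 4) ≤ 1 := fun y =>
    Real.exp_le_one_iff.2 (by nlinarith [sq_nonneg y])
  unfold bump
  linarith [h (s * x), h (s * (2 * Real.pi - x))]

/-- On one period the full lattice sum is controlled by its two nearest terms. -/
lemma theta_bound {s : ℝ} (hs : 0 < s) {x : ℝ} (hx : x ∈ Set.Icc 0 (2 * Real.pi)) :
    ∑' n : ℤ, Real.exp (-(s * (x - 2 * Real.pi * n)) ^ 2 / 4) ≤ (1 + 1 / s ^ 2) * bump s x := by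
  have hs2 : 0 < s ^ 2 := by positivity
  set g : ℤ → ℝ := fun n => Real.exp (-(s * (x + 2 * Real.pi * n)) ^ 2 / 4) with hg
  have hS := summable_exp_neg_mul_nat hs2
  have e1 : ∑' n : ℤ, Real.exp (-(s * (x - 2 * Real.pi * n)) ^ 2 / 4) = ∑' n, g n := by
    rw [← (Equiv.neg ℤ).tsum_eq]
    refine tsum_congr fun n => ?_
    simp [hg]
  have b1 : ∀ j : ℕ, g j ≤ Real.exp (-(s * x) ^ 2 / 4) * Real.exp (-s ^ 2 * j) := fun j => by
    simpa [hg] using exp_shift_le (s := s) hx.1 j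
  have b2 : ∀ j : ℕ, g (-(j + 1)) ≤
      Real.exp (-(s * (2 * Real.pi - x)) ^ 2 / 4) * Real.exp (-s ^ 2 * j) := fun j => by
    have := exp_shift_le (s := s) (y := 2 * Real.pi - x) (by linarith [hx.2]) j
    refine le_trans (le_of_eq ?_) this
    simp only [hg]
    congr 1
    push_cast
    ring
  have s1 : Summable fun j : ℕ => g j :=
    Summable.of_nonneg_of_le (fun _ => (Real.exp_pos _).le) b1 (hS.mul_left _)
  have s2 : Summable fun j : ℕ => g (-(j + 1)) :=
    Summable.of_nonneg_of_le (fun _ => (Real.exp_pos _).le) b2 (hS.mul_left _)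
  rw [e1, tsum_of_nat_of_neg_add_one s1 s2]
  have t1 := Summable.tsum_le_tsum b1 s1 (hS.mul_left _)
  have t2 := Summable.tsum_le_tsum b2 s2 (hS.mul_left _)
  rw [tsum_mul_left] at t1 t2
  have t3 := tsum_exp_neg_mul_nat_le hs2
  calc _ ≤ (∑' j : ℕ, Real.exp (-s ^ 2 * j)) * bump s x := by unfold bump; linarith
    _ ≤ _ := by
      have := bump_pos s x
      gcongr

/-- A majorant for the terms of the lattice sum which is uniform for `|x| < R`. -/
lemma exp_local_le {s R x : ℝ} (hx : |x| < R) (n : ℤ) :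
    Real.exp (-(s * (x - 2 * Real.pi * n)) ^ 2 / 4) ≤
      Real.exp (s ^ 2 * R ^ 2 / 4) * Real.exp (-(s ^ 2 / 4) * |(n : ℝ)|) := by
  rw [← Real.exp_add, Real.exp_le_exp]
  have hpi := Real.pi_gt_three
  have hn : |(n : ℝ)| ≤ (n : ℝ) ^ 2 := by
    rw [← sq_abs]
    rcases eq_or_ne n 0 with rfl | h
    · simp
    · have : (1 : ℝ) ≤ |(n : ℝ)| := by exact_mod_cast Int.one_le_abs h
      nlinarith
  have hR : x ^ 2 ≤ R ^ 2 := by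
    rw [← sq_abs x]; gcongr
  have h1 : |(n : ℝ)| ≤ (2 * Real.pi * n) ^ 2 / 2 := by
    have : 1 ≤ Real.pi ^ 2 := by nlinarith
    nlinarith [mul_le_mul_of_nonneg_right this (sq_nonneg (n : ℝ))]
  have h2 : |(n : ℝ)| - R ^ 2 ≤ (x - 2 * Real.pi * n) ^ 2 := by
    nlinarith [sq_nonneg (2 * x - 2 * Real.pi * n)]
  nlinarith [mul_le_mul_of_nonneg_left h2 (sq_nonneg s)]

lemma summable_majorant {s : ℝ} (hs : 0 < s) :
    Summable fun n : ℤ => Real.exp (-(s ^ 2 / 4) * |(n : ℝ)|) := by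
  have h : 0 < s ^ 2 / 4 := by positivity
  refine Summable.of_nat_of_neg ?_ ?_
  · simpa using summable_exp_neg_mul_nat h
  · simpa using summable_exp_neg_mul_nat h

/-- The `m`-th derivative of the one-dimensional periodized Gaussian
`∑ₙ exp (-(s (x - 2πn))² / 2)`. -/
noncomputable def perGauss (s : ℝ) (m : ℕ) (x : ℝ) : ℝ :=
  ∑' n : ℤ, s ^ m * gauss m (s * (x - 2 * Real.pi * n))

lemma summable_theta {s : ℝ} (hs : 0 < s) (x : ℝ) :
    Summable fun n : ℤ => Real.exp (-(s * (x - 2 * Real.pi * n)) ^ 2 / 4) :=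
  Summable.of_nonneg_of_le (fun _ => (Real.exp_pos _).le)
    (fun n => exp_local_le (lt_add_one |x|) n) ((summable_majorant hs).mul_left _)

lemma summable_perGauss {s : ℝ} (hs : 0 < s) (m : ℕ) (x : ℝ) :
    Summable fun n : ℤ => s ^ m * gauss m (s * (x - 2 * Real.pi * n)) := by
  obtain ⟨C, hC, h⟩ := exists_gauss_bound m
  refine Summable.mul_left _ ?_
  exact Summable.of_norm_bounded ((summable_theta hs x).mul_left C) fun n => by
    simpa using h (s * (x - 2 * Real.pi * n))

lemma hasDerivAt_perGauss {s : ℝ} (hs : 0 < s) (m : ℕ) (x : ℝ) :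
    HasDerivAt (perGauss s m) (perGauss s (m + 1) x) x := by
  obtain ⟨C, hC, h⟩ := exists_gauss_bound (m + 1)
  have hx : x ∈ Metric.ball (0 : ℝ) (|x| + 1) := by simp
  have hu := ((summable_majorant hs).mul_left (Real.exp (s ^ 2 * (|x| + 1) ^ 2 / 4))).mul_left
    (s ^ (m + 1) * C)
  have hd : ∀ (n : ℤ) (y : ℝ), y ∈ Metric.ball (0 : ℝ) (|x| + 1) →
      HasDerivAt (fun y => s ^ m * gauss m (s * (y - 2 * Real.pi * n)))
        (s ^ (m + 1) * gauss (m + 1) (s * (y - 2 * Real.pi * n))) y := by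
    intro n y _
    have h1 : HasDerivAt (fun y : ℝ => s * (y - 2 * Real.pi * n)) (s * 1) y :=
      ((hasDerivAt_id y).sub_const _).const_mul s
    have := ((hasDerivAt_gauss m (s * (y - 2 * Real.pi * n))).comp y h1).const_mul (s ^ m)
    refine this.congr_deriv ?_
    ring
  have hb : ∀ (n : ℤ) (y : ℝ), y ∈ Metric.ball (0 : ℝ) (|x| + 1) →
      ‖s ^ (m + 1) * gauss (m + 1) (s * (y - 2 * Real.pi * n))‖ ≤
        s ^ (m + 1) * C * (Real.exp (s ^ 2 * (|x| + 1) ^ 2 / 4) *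
          Real.exp (-(s ^ 2 / 4) * |(n : ℝ)|)) := by
    intro n y hy
    have hy' : |y| < |x| + 1 := by simpa using hy
    rw [Real.norm_eq_abs, abs_mul, abs_of_pos (pow_pos hs _), mul_assoc (s ^ (m + 1)) C]
    refine mul_le_mul_of_nonneg_left ((h _).trans ?_) (pow_pos hs _).le
    exact mul_le_mul_of_nonneg_left (exp_local_le hy' n) hC.le
  exact hasDerivAt_tsum_of_isPreconnected hu Metric.isOpen_ball
    (convex_ball (0 : ℝ) (|x| + 1)).isPreconnected hd hb hx (summable_perGauss hs m x) hx

lemma perGauss_period (s : ℝ) (m : ℕ) : perGauss s m 0 = perGauss s m (2 * Real.pi) := by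
  unfold perGauss
  rw [← (Equiv.subRight (1 : ℤ)).tsum_eq]
  refine tsum_congr fun n => ?_
  simp only [Equiv.subRight_apply]
  push_cast
  congr 3
  ring

lemma exists_perGauss_bound (m : ℕ) : ∃ C : ℝ, 0 < C ∧ ∀ s : ℝ, 0 < s →
    ∀ x ∈ Set.Icc 0 (2 * Real.pi),
      |perGauss s m x| ≤ C * s ^ m * (1 + 1 / s ^ 2) * bump s x := by
  obtain ⟨C, hC, h⟩ := exists_gauss_bound m
  refine ⟨C, hC, fun s hs x hx => ?_⟩
  have hS := (summable_theta hs x).mul_left (s ^ m * C)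
  have hb : ∀ n : ℤ, ‖s ^ m * gauss m (s * (x - 2 * Real.pi * n))‖ ≤
      s ^ m * C * Real.exp (-(s * (x - 2 * Real.pi * n)) ^ 2 / 4) := fun n => by
    rw [Real.norm_eq_abs, abs_mul, abs_of_pos (pow_pos hs _), mul_assoc (s ^ m) C]
    exact mul_le_mul_of_nonneg_left (h _) (by positivity)
  have := tsum_of_norm_bounded hS.hasSum hb
  calc |perGauss s m x| ≤ _ := this
    _ = s ^ m * C * ∑' n : ℤ, Real.exp (-(s * (x - 2 * Real.pi * n)) ^ 2 / 4) := tsum_mul_left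
    _ ≤ s ^ m * C * ((1 + 1 / s ^ 2) * bump s x) := by
      gcongr
      exact theta_bound hs hx
    _ = _ := by ring

/-- A Poincaré inequality: a derivative of a periodic function vanishes somewhere in the period
(Rolle), so it is bounded by `2π` times the supremum of its own derivative. -/
lemma perGauss_poincare {s : ℝ} (hs : 0 < s) (m : ℕ) {B : ℝ}
    (hB : ∀ x ∈ Set.Icc 0 (2 * Real.pi), |perGauss s (m + 2) x| ≤ B) :
    ∀ x ∈ Set.Icc 0 (2 * Real.pi), |perGauss s (m + 1) x| ≤ 2 * Real.pi * B := by
  intro x hx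
  obtain ⟨c, hc, h0⟩ := exists_hasDerivAt_eq_zero Real.two_pi_pos
    (fun y _ => (hasDerivAt_perGauss hs m y).continuousAt.continuousWithinAt)
    (perGauss_period s m) (fun y _ => hasDerivAt_perGauss hs m y)
  have hc' := Set.Ioo_subset_Icc_self hc
  have := (convex_Icc 0 (2 * Real.pi)).norm_image_sub_le_of_norm_hasDerivWithin_le
    (fun y _ => (hasDerivAt_perGauss hs (m + 1) y).hasDerivWithinAt) hB hc' hx
  rw [h0, sub_zero, Real.norm_eq_abs, Real.norm_eq_abs] at this
  have hB0 : 0 ≤ B := (abs_nonneg _).trans (hB x hx)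
  have hxc : |x - c| ≤ 2 * Real.pi := by
    rw [abs_le]; constructor <;> linarith [hx.1, hx.2, hc'.1, hc'.2]
  nlinarith

/-- For small `s` (large time) every genuine derivative decays faster than any power of `s`. -/
lemma exists_perGauss_decay (m N : ℕ) : ∃ C : ℝ, 0 < C ∧ ∀ s : ℝ, 0 < s → s ≤ 1 →
    ∀ x ∈ Set.Icc 0 (2 * Real.pi), |perGauss s (m + 1) x| ≤ C * s ^ N := by
  -- the `(m+1)`-st derivative satisfies the bound directly once `m + 1 ≥ N + 2`; lower orders follow
  -- by `k` applications of the Poincaré inequality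
  have key : ∀ k m : ℕ, N + 2 ≤ m + 1 + k → ∃ C : ℝ, 0 < C ∧ ∀ s : ℝ, 0 < s → s ≤ 1 →
      ∀ x ∈ Set.Icc 0 (2 * Real.pi), |perGauss s (m + 1) x| ≤ C * s ^ N := by
    intro k
    induction k with
    | zero =>
      intro m hm
      obtain ⟨C, hC, h⟩ := exists_perGauss_bound (m + 1)
      refine ⟨C * 4, by positivity, fun s hs hs1 x hx => (h s hs x hx).trans ?_⟩
      have h2 : s ^ (m + 1) * (1 + 1 / s ^ 2) ≤ 2 * s ^ N := by
        have e : s ^ (m + 1) ≤ s ^ (N + 2) := pow_le_pow_of_le_one hs.le hs1 (by omega)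
        calc s ^ (m + 1) * (1 + 1 / s ^ 2) ≤ s ^ (N + 2) * (1 + 1 / s ^ 2) := by gcongr
          _ = s ^ N * (s ^ 2 + 1) := by field_simp; ring
          _ ≤ s ^ N * (1 + 1) := by gcongr; exact pow_le_one₀ hs.le hs1
          _ = _ := by ring
      calc C * s ^ (m + 1) * (1 + 1 / s ^ 2) * bump s x
          ≤ C * s ^ (m + 1) * (1 + 1 / s ^ 2) * 2 := by gcongr; exact bump_le_two s x
        _ = C * (s ^ (m + 1) * (1 + 1 / s ^ 2)) * 2 := by ring
        _ ≤ C * (2 * s ^ N) * 2 := by gcongr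
        _ = _ := by ring
    | succ k ih =>
      intro m hm
      obtain ⟨C, hC, h⟩ := ih (m + 1) (by omega)
      refine ⟨2 * Real.pi * C, by positivity, fun s hs hs1 x hx => ?_⟩
      rw [mul_assoc]
      exact perGauss_poincare hs m (h s hs hs1) x hx
  exact key (N + 2) m (by omega)

/-! ### The heat kernel as a tensor product -/

lemma hasSum_pi_prod (d : ℕ) (f : Fin d → ℤ → ℝ) (hf : ∀ i, Summable (f i))
    (h0 : ∀ i n, 0 ≤ f i n) :
    HasSum (fun k : Fin d → ℤ => ∏ i, f i (k i)) (∏ i, ∑' n, f i n) := by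
  induction d with
  | zero => simp
  | succ d ih =>
    have ih' := ih (fun i => f i.succ) (fun i => hf _) fun i => h0 _
    have hsum := (hf 0).mul_of_nonneg ih'.summable (h0 0)
      fun k => Finset.prod_nonneg fun i _ => h0 _ _
    have h := (hf 0).hasSum.mul ih' hsum
    rw [Fin.prod_univ_succ, ← (Fin.consEquiv fun _ : Fin (d + 1) => ℤ).hasSum_iff]
    refine h.congr_fun ?_
    intro k
    simp [Fin.prod_univ_succ, Fin.consEquiv]

/-- A constant times the tensor product of the one-dimensional derivatives of orders `β i`. -/
noncomputable def prodKernel (d : ℕ) (c s : ℝ) (β : Fin d → ℕ) (x : Fin d → ℝ) : ℝ :=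
  c * ∏ i, perGauss s (β i) (x i)

lemma torusHeatKernel_eq (d : ℕ) {t s : ℝ} (hs : 0 < s) (hst : s ^ 2 = 1 / (2 * t)) :
    torusHeatKernel d t = prodKernel d ((4 * Real.pi * t) ^ (-(d : ℝ) / 2)) s 0 := by
  funext x
  have h := hasSum_pi_prod d (fun i n => s ^ 0 * gauss 0 (s * (x i - 2 * Real.pi * n)))
    (fun i => summable_perGauss hs 0 (x i))
    (fun i n => by simp only [gauss, gaussPoly, Polynomial.eval_one]; positivity)
  unfold torusHeatKernel prodKernel
  rw [tsum_mul_left]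
  congr 1
  refine Eq.trans (tsum_congr fun k => ?_) h.tsum_eq
  simp only [gauss, gaussPoly, Polynomial.eval_one, pow_zero, one_mul]
  rw [← Real.exp_sum]
  congr 1
  rw [neg_div, Finset.sum_div, ← Finset.sum_neg_distrib]
  refine Finset.sum_congr rfl fun i _ => ?_
  rw [mul_pow, hst]
  ring

lemma pderivCoord_prodKernel (d : ℕ) (c : ℝ) {s : ℝ} (hs : 0 < s) (β : Fin d → ℕ) (i : Fin d) :
    pderivCoord d i (prodKernel d c s β) = prodKernel d c s (β + Pi.single i 1) := by
  funext x
  have h1 : ∀ j ∈ (Finset.univ : Finset (Fin d)),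
      HasFDerivAt (fun x : Fin d → ℝ => perGauss s (β j) (x j))
        (perGauss s (β j + 1) (x j) •
          (ContinuousLinearMap.proj j : (Fin d → ℝ) →L[ℝ] ℝ)) x := by
    intro j _
    have hj : HasFDerivAt (fun x : Fin d → ℝ => x j)
        (ContinuousLinearMap.proj j : (Fin d → ℝ) →L[ℝ] ℝ) x := hasFDerivAt_apply j x
    exact HasDerivAt.comp_hasFDerivAt x (hasDerivAt_perGauss hs (β j) (x j)) hj
  have h2 := (HasFDerivAt.finsetProd h1).const_mul c
  have h3 : fderiv ℝ (prodKernel d c s β) x = _ := h2.fderiv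
  unfold pderivCoord
  rw [h3]
  simp only [smul_apply, sum_apply,
    ContinuousLinearMap.proj_apply, smul_eq_mul, prodKernel]
  congr 1
  rw [Finset.sum_eq_single i (fun j _ hj => by simp [hj]) (by simp),
    ← Finset.mul_prod_erase _ _ (Finset.mem_univ i)]
  rw [mul_comm]
  congr 1
  · simp
  · refine Finset.prod_congr rfl fun j hj => ?_
    simp [Finset.ne_of_mem_erase hj]

lemma pderivCoord_iterate_prodKernel (d : ℕ) (c : ℝ) {s : ℝ} (hs : 0 < s) (β : Fin d → ℕ)
    (i : Fin d) (m : ℕ) :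
    (pderivCoord d i)^[m] (prodKernel d c s β) = prodKernel d c s (β + Pi.single i m) := by
  induction m with
  | zero => simp
  | succ m ih =>
    rw [Function.iterate_succ_apply', ih, pderivCoord_prodKernel d c hs, add_assoc,
      ← Pi.single_add]

lemma multiDeriv_prodKernel (d : ℕ) (c : ℝ) {s : ℝ} (hs : 0 < s) (α : Fin d → ℕ) :
    multiDeriv d α (prodKernel d c s 0) = prodKernel d c s α := by
  have key : ∀ (l : List (Fin d)) (β : Fin d → ℕ),
      l.foldl (fun g i => (pderivCoord d i)^[α i] g) (prodKernel d c s β) =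
        prodKernel d c s (β + (l.map fun i => Pi.single i (α i)).sum) := by
    intro l
    induction l with
    | nil => intro β; simp
    | cons a l ih =>
      intro β
      rw [List.foldl_cons, pderivCoord_iterate_prodKernel d c hs, ih, List.map_cons,
        List.sum_cons, add_assoc]
  rw [multiDeriv, key, ← Fin.sum_univ_def, Finset.univ_sum_single, zero_add]

/-! ### Norm estimates on the torus -/

lemma ae_torusMeasure (d : ℕ) :
    ∀ᵐ x ∂torusMeasure d, ∀ i, x i ∈ Set.Icc 0 (2 * Real.pi) := by
  have hm : MeasurableSet (Set.pi Set.univ fun _ : Fin d => Set.Ioc 0 (2 * Real.pi)) :=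
    MeasurableSet.univ_pi fun _ => measurableSet_Ioc
  filter_upwards [ae_restrict_mem hm] with x hx i
  exact Set.Ioc_subset_Icc_self (hx i (Set.mem_univ i))

lemma torusMeasure_univ_lt_top (d : ℕ) : torusMeasure d Set.univ < ∞ := by
  rw [torusMeasure, Measure.restrict_apply_univ, Real.volume_pi_Ioc]
  exact ENNReal.prod_lt_top fun i _ => ENNReal.ofReal_lt_top

lemma integrable_bump {s : ℝ} (hs : 0 < s) :
    Integrable (fun x => bump s x / 2) ∧ ∫ x, bump s x / 2 = 2 * √Real.pi / s := by
  have hb : 0 < s ^ 2 / 4 := by positivity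
  have h1 := integrable_exp_neg_mul_sq hb
  have e1 : (fun x : ℝ => Real.exp (-(s ^ 2 / 4) * x ^ 2)) =
      fun x => Real.exp (-(s * x) ^ 2 / 4) := by
    funext x; congr 1; ring
  have h2 := integral_gaussian (s ^ 2 / 4)
  rw [e1] at h1 h2
  have h3 : Integrable fun x : ℝ => Real.exp (-(s * (2 * Real.pi - x)) ^ 2 / 4) :=
    h1.comp_sub_left (2 * Real.pi)
  have h4 : ∫ x : ℝ, Real.exp (-(s * (2 * Real.pi - x)) ^ 2 / 4) = √(Real.pi / (s ^ 2 / 4)) := by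
    rw [← h2]
    exact integral_sub_left_eq_self (fun x : ℝ => Real.exp (-(s * x) ^ 2 / 4)) volume _
  have h5 : √(Real.pi / (s ^ 2 / 4)) = 2 * √Real.pi / s := by
    rw [show Real.pi / (s ^ 2 / 4) = Real.pi * (2 / s) ^ 2 by field_simp; ring,
      Real.sqrt_mul Real.pi_pos.le, Real.sqrt_sq (by positivity)]
    ring
  refine ⟨(h1.add h3).div_const 2, ?_⟩
  rw [integral_div]
  unfold bump
  rw [integral_add h1 h3, h2, h4, h5]
  ring

/-- The normalized product `∏ bump / 2` has values in `[0, 1]`, so its `L^p` norm is at most the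
`1/p`-th power of its integral over `ℝ^d`. For `p = ∞` the exponent `1 / p.toReal` is `0` and the
bound is `1`. -/
lemma eLpNorm_prod_bump_le (d : ℕ) (p : ℝ≥0∞) (hp : 1 ≤ p) {s : ℝ} (hs : 0 < s) :
    eLpNorm (fun x : Fin d → ℝ => ∏ i, bump s (x i) / 2) p (torusMeasure d) ≤
      ENNReal.ofReal (((2 * √Real.pi / s) ^ d) ^ (1 / p.toReal)) := by
  set H : (Fin d → ℝ) → ℝ := fun x => ∏ i, bump s (x i) / 2 with hH
  have H0 : ∀ x, 0 ≤ H x := fun x => Finset.prod_nonneg fun i _ => by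
    have := bump_pos s (x i); positivity
  have H1 : ∀ x, H x ≤ 1 := fun x => Finset.prod_le_one
    (fun i _ => by have := bump_pos s (x i); positivity)
    (fun i _ => by linarith [bump_le_two s (x i)])
  rcases eq_or_ne p ∞ with rfl | hpt
  · refine (eLpNorm_le_of_ae_bound (C := 1) (ae_of_all _ fun x => ?_)).trans ?_
    · rw [Real.norm_eq_abs, abs_of_nonneg (H0 x)]; exact H1 x
    · simp
  have hp1 : 1 ≤ p.toReal := by
    simpa using ENNReal.toReal_mono hpt hp
  rw [eLpNorm_eq_lintegral_rpow_enorm_toReal (by positivity) hpt,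
    ← ENNReal.ofReal_rpow_of_nonneg (by positivity) (by positivity)]
  refine ENNReal.rpow_le_rpow ?_ (by positivity)
  have hint : Integrable H := Integrable.fintype_prod fun _ => (integrable_bump hs).1
  calc ∫⁻ x, ‖H x‖ₑ ^ p.toReal ∂torusMeasure d
      ≤ ∫⁻ x, ‖H x‖ₑ ∂torusMeasure d := by
        refine lintegral_mono fun x => ?_
        have : ‖H x‖ₑ ≤ 1 := by
          rw [Real.enorm_of_nonneg (H0 x)]
          exact ENNReal.ofReal_le_one.2 (H1 x)
        simpa using ENNReal.rpow_le_rpow_of_exponent_ge this hp1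
    _ ≤ ∫⁻ x, ‖H x‖ₑ := setLIntegral_le_lintegral _ _
    _ = ∫⁻ x, ENNReal.ofReal (H x) :=
        lintegral_congr fun x => Real.enorm_of_nonneg (H0 x)
    _ = ENNReal.ofReal (∫ x, H x) :=
        (ofReal_integral_eq_lintegral_ofReal hint (ae_of_all _ H0)).symm
    _ = _ := by
        rw [hH, integral_fintype_prod_volume_eq_pow (fun y : ℝ => bump s y / 2),
          (integrable_bump hs).2, Fintype.card_fin]

/-- The short-time regime `s ≥ 1`: the two Gaussians nearest to the period dominate. -/
lemma exists_bound_large (d : ℕ) (p : ℝ≥0∞) (hp : 1 ≤ p) (α : Fin d → ℕ) :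
    ∃ C : ℝ, 0 < C ∧ ∀ s : ℝ, 1 ≤ s →
      eLpNorm (prodKernel d (s ^ d) s α) p (torusMeasure d) ≤
        ENNReal.ofReal (C * s ^ ((∑ i, (α i : ℝ)) + d * (1 - 1 / p.toReal))) := by
  choose C hC h using fun i => exists_perGauss_bound (α i)
  set A : ℝ := ∏ i, 4 * C i with hA
  have hA0 : 0 < A := Finset.prod_pos fun i _ => by have := hC i; positivity
  refine ⟨A * ((2 * √Real.pi) ^ d) ^ (1 / p.toReal), by positivity, fun s hs1 => ?_⟩
  have hs : 0 < s := by linarith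
  have hb : ∀ᵐ x ∂torusMeasure d, ‖prodKernel d (s ^ d) s α x‖ ≤
      (s ^ d * (A * s ^ ∑ i, α i)) * ‖∏ i, bump s (x i) / 2‖ := by
    filter_upwards [ae_torusMeasure d] with x hx
    have hpos : 0 ≤ ∏ i, bump s (x i) / 2 := Finset.prod_nonneg fun i _ => by
      have := bump_pos s (x i); positivity
    rw [prodKernel, norm_mul, Real.norm_eq_abs, Real.norm_eq_abs, Real.norm_eq_abs,
      abs_of_nonneg hpos, abs_of_pos (pow_pos hs d), Finset.abs_prod, mul_assoc]
    gcongr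
    rw [hA, ← Finset.prod_pow_eq_pow_sum, ← Finset.prod_mul_distrib, ← Finset.prod_mul_distrib]
    refine Finset.prod_le_prod (fun _ _ => abs_nonneg _) fun i _ => ?_
    have h2 : 1 / s ^ 2 ≤ 1 := by
      rw [div_le_one (by positivity)]; exact one_le_pow₀ hs1
    have h3 := bump_pos s (x i)
    have h4 := hC i
    calc |perGauss s (α i) (x i)| ≤ C i * s ^ α i * (1 + 1 / s ^ 2) * bump s (x i) :=
          h i s hs _ (hx i)
      _ ≤ C i * s ^ α i * (1 + 1) * bump s (x i) := by gcongr
      _ = _ := by ring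
  refine (eLpNorm_le_mul_eLpNorm_of_ae_le_mul hb p).trans ?_
  refine (mul_le_mul_right (eLpNorm_prod_bump_le d p hp hs) _).trans ?_
  rw [← ENNReal.ofReal_mul (by positivity)]
  refine ENNReal.ofReal_le_ofReal (le_of_eq ?_)
  rw [div_pow, Real.div_rpow (by positivity) (by positivity)]
  have e : s ^ ((∑ i, (α i : ℝ)) + d * (1 - 1 / p.toReal)) =
      s ^ d * s ^ (∑ i, α i) / (s ^ d) ^ (1 / p.toReal) := by
    rw [← Real.rpow_natCast s d, ← Real.rpow_natCast s (∑ i, α i), ← Real.rpow_mul hs.le,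
      ← Real.rpow_add hs, ← Real.rpow_sub hs]
    congr 1
    push_cast
    ring
  rw [e]
  ring

/-- The long-time regime `s ≤ 1`: the factor carrying a derivative decays faster than any power of
`s`, which compensates the crude bound `s⁻²` for the remaining factors. -/
lemma exists_bound_small (d : ℕ) (p : ℝ≥0∞) (α : Fin d → ℕ) (hα : α ≠ 0) :
    ∃ C : ℝ, 0 < C ∧ ∀ s : ℝ, 0 < s → s ≤ 1 →
      eLpNorm (prodKernel d (s ^ d) s α) p (torusMeasure d) ≤
        ENNReal.ofReal (C * s ^ ((∑ i, (α i : ℝ)) + d * (1 - 1 / p.toReal))) := by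
  obtain ⟨i₀, hi₀⟩ := Function.ne_iff.1 hα
  set N : ℕ := 2 * d + ∑ i, α i with hN
  have hfac : ∀ i, ∃ C : ℝ, 0 < C ∧ ∀ s : ℝ, 0 < s → s ≤ 1 →
      ∀ x ∈ Set.Icc 0 (2 * Real.pi),
        s ^ 2 * |perGauss s (α i) x| ≤ C * s ^ (if i = i₀ then N else 0) := by
    intro i
    by_cases hi : i = i₀
    · obtain ⟨m, hm⟩ := Nat.exists_eq_succ_of_ne_zero (hi ▸ hi₀ : α i ≠ 0)
      obtain ⟨C, hC, h⟩ := exists_perGauss_decay m N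
      refine ⟨C, hC, fun s hs hs1 x hx => ?_⟩
      rw [if_pos hi, hm]
      calc s ^ 2 * |perGauss s (m + 1) x| ≤ 1 * |perGauss s (m + 1) x| := by
            gcongr; exact pow_le_one₀ hs.le hs1
        _ ≤ _ := by rw [one_mul]; exact h s hs hs1 x hx
    · obtain ⟨C, hC, h⟩ := exists_perGauss_bound (α i)
      refine ⟨C * 4, by positivity, fun s hs hs1 x hx => ?_⟩
      rw [if_neg hi, pow_zero, mul_one]
      have h1 : s ^ α i ≤ 1 := pow_le_one₀ hs.le hs1
      have h2 : s ^ 2 ≤ 1 := pow_le_one₀ hs.le hs1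
      have h3 := (bump_pos s x).le
      calc s ^ 2 * |perGauss s (α i) x|
          ≤ s ^ 2 * (C * s ^ α i * (1 + 1 / s ^ 2) * bump s x) := by
            gcongr; exact h s hs x hx
        _ = C * s ^ α i * (s ^ 2 + 1) * bump s x := by field_simp
        _ ≤ C * 1 * (1 + 1) * 2 := by gcongr; exact bump_le_two s x
        _ = _ := by ring
  choose C hC h using hfac
  set A : ℝ := ∏ i, C i with hA
  have hA0 : 0 < A := Finset.prod_pos fun i _ => hC i
  set M : ℝ≥0∞ := torusMeasure d Set.univ ^ p.toReal⁻¹ with hM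
  have hMt : M ≠ ∞ := ENNReal.rpow_ne_top_of_nonneg (by positivity) (torusMeasure_univ_lt_top d).ne
  refine ⟨(M.toReal + 1) * A, by positivity, fun s hs hs1 => ?_⟩
  have hb : ∀ᵐ x ∂torusMeasure d, ‖prodKernel d (s ^ d) s α x‖ ≤
      A * s ^ ((∑ i, (α i : ℝ)) + d * (1 - 1 / p.toReal)) := by
    filter_upwards [ae_torusMeasure d] with x hx
    have h1 : ∏ i, (s ^ 2 * |perGauss s (α i) (x i)|) ≤
        ∏ i, (C i * s ^ (if i = i₀ then N else 0)) :=
      Finset.prod_le_prod (fun _ _ => by positivity) fun i _ => h i s hs hs1 _ (hx i)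
    rw [Finset.prod_mul_distrib, Finset.prod_mul_distrib, Finset.prod_const, Finset.card_univ,
      Fintype.card_fin, Finset.prod_pow_eq_pow_sum, Finset.sum_ite_eq', if_pos (Finset.mem_univ _),
      ← pow_mul, hN, pow_add, ← hA, mul_left_comm] at h1
    have h2 := le_of_mul_le_mul_left h1 (by positivity)
    rw [prodKernel, norm_mul, Real.norm_eq_abs, Real.norm_eq_abs, abs_of_pos (pow_pos hs d),
      Finset.abs_prod]
    calc s ^ d * ∏ i, |perGauss s (α i) (x i)| ≤ s ^ d * (A * s ^ ∑ i, α i) := by gcongr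
      _ = A * s ^ ((∑ i, (α i : ℝ)) + d) := by
        rw [Real.rpow_add hs, Real.rpow_natCast, ← Nat.cast_sum, Real.rpow_natCast]
        ring
      _ ≤ _ := by
        refine mul_le_mul_of_nonneg_left ?_ hA0.le
        refine Real.rpow_le_rpow_of_exponent_ge hs hs1 ?_
        have : 0 ≤ (d : ℝ) * (1 / p.toReal) := by positivity
        linarith
  refine (eLpNorm_le_of_ae_bound hb).trans ?_
  rw [← hM, ← ENNReal.ofReal_toReal hMt, ← ENNReal.ofReal_mul ENNReal.toReal_nonneg, mul_assoc]
  refine ENNReal.ofReal_le_ofReal ?_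
  rw [ENNReal.toReal_ofReal ENNReal.toReal_nonneg]
  gcongr
  linarith

end TorusHeat

open TorusHeat in
theorem heatKernel_deriv_Lp_bound (d : ℕ) (hd : 1 ≤ d) (p : ℝ≥0∞) (hp : 1 ≤ p)
    (α : Fin d → ℕ) (hα : α ≠ 0) :
    ∃ C : ℝ, 0 < C ∧ ∀ t : ℝ, 0 < t →
      eLpNorm (multiDeriv d α (torusHeatKernel d t)) p (torusMeasure d)
        ≤ ENNReal.ofReal
            (C * t ^ (-(∑ i, (α i : ℝ)) / 2 - (d : ℝ) / 2 * (1 - 1 / p.toReal))) := by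
  obtain ⟨C₁, hC₁, h₁⟩ := exists_bound_large d p hp α
  obtain ⟨C₂, hC₂, h₂⟩ := exists_bound_small d p α hα
  set e : ℝ := -(∑ i, (α i : ℝ)) / 2 - (d : ℝ) / 2 * (1 - 1 / p.toReal) with he
  set E : ℝ := (∑ i, (α i : ℝ)) + d * (1 - 1 / p.toReal) with hE
  set c : ℝ := (2 * Real.pi) ^ (-(d : ℝ) / 2) with hc
  have hc0 : 0 < c := by positivity
  refine ⟨c * (C₁ + C₂) * 2 ^ e, by positivity, fun t ht => ?_⟩
  have ht2 : 0 < 2 * t := by positivity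
  -- with this scale `s`, the Gaussian `exp (-y² / (4t))` is `exp (-(s y)² / 2)`
  set s : ℝ := (2 * t) ^ (-(1 / 2) : ℝ) with hs
  have hs0 : 0 < s := by positivity
  have hst : s ^ 2 = 1 / (2 * t) := by
    rw [hs, ← Real.rpow_natCast, ← Real.rpow_mul ht2.le,
      show (-(1 / 2) : ℝ) * ((2 : ℕ) : ℝ) = -1 by norm_num, Real.rpow_neg_one, one_div]
  have hsE : s ^ E = 2 ^ e * t ^ e := by
    rw [hs, ← Real.rpow_mul ht2.le, ← Real.mul_rpow (by norm_num) ht.le]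
    congr 1
    rw [hE, he]
    ring
  have hpre : (4 * Real.pi * t) ^ (-(d : ℝ) / 2) = c * s ^ d := by
    rw [show 4 * Real.pi * t = 2 * Real.pi * (2 * t) by ring,
      Real.mul_rpow (by positivity) ht2.le, hs, ← Real.rpow_natCast, ← Real.rpow_mul ht2.le]
    congr 2
    ring
  have hker : multiDeriv d α (torusHeatKernel d t) = c • prodKernel d (s ^ d) s α := by
    rw [torusHeatKernel_eq d hs0 hst, multiDeriv_prodKernel d _ hs0, hpre]
    funext x
    simp only [prodKernel, Pi.smul_apply, smul_eq_mul]
    ring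
  have hs' : eLpNorm (prodKernel d (s ^ d) s α) p (torusMeasure d) ≤
      ENNReal.ofReal ((C₁ + C₂) * s ^ E) := by
    rcases le_total 1 s with h | h
    · refine (h₁ s h).trans (ENNReal.ofReal_le_ofReal ?_)
      gcongr
      linarith
    · refine (h₂ s hs0 h).trans (ENNReal.ofReal_le_ofReal ?_)
      gcongr
      linarith
  rw [hker, eLpNorm_const_smul, Real.enorm_of_nonneg hc0.le]
  refine (mul_le_mul_right hs' _).trans ?_
  rw [← ENNReal.ofReal_mul hc0.le, hsE]
  exact ENNReal.ofReal_le_ofReal (le_of_eq (by ring))
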